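/- Anderson's inequality: if X is a centered Gaussian random vector in ℝ^d and C ⊆ ℝ^d is a symmetric convex Borel set, then for every x ∈ ℝ^d, P{X + x ∈ C} ≤ P{X ∈ C}. -/

import Mathlib

open MeasureTheory ProbabilityTheory NNReal
open scoped ENNReal

lemma bm_one {A B M : Set ℝ} (hA : MeasurableSet A) (hB : MeasurableSet B)
    (hAn : A.Nonempty) (hBn : B.Nonempty)
    (h : ∀ a ∈ A, ∀ b ∈ B, (1/2:ℝ) • (a + b) ∈ M) :
    volume A + volume B ≤ 2 * volume M := by
  obtain ⟨a0, ha0⟩ := hAn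
  obtain ⟨b0, hb0⟩ := hBn
  rw [hA.measure_eq_iSup_isCompact, hB.measure_eq_iSup_isCompact]
  simp only [iSup_and']
  refine ENNReal.biSup_add_biSup_le' ⟨∅, by simp⟩ ⟨∅, by simp⟩ ?_
  rintro K ⟨hKA, hK⟩ L ⟨hLB, hL⟩
  have hK' : IsCompact (insert a0 K) := hK.insert a0
  have hL' : IsCompact (insert b0 L) := hL.insert b0
  have hKA' : insert a0 K ⊆ A := Set.insert_subset ha0 hKA
  have hLB' : insert b0 L ⊆ B := Set.insert_subset hb0 hLB
  obtain ⟨a, haK, ha⟩ := hK'.exists_isGreatest (Set.insert_nonempty _ _)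
  obtain ⟨b, hbL, hb⟩ := hL'.exists_isLeast (Set.insert_nonempty _ _)
  have e1 : volume K = 2 * volume ((fun y : ℝ => 2 * y + (-b)) ⁻¹' K) := by
    have : (fun y : ℝ => 2 * y + (-b)) ⁻¹' K = (fun y : ℝ => 2 * y) ⁻¹' ((fun y => y + (-b)) ⁻¹' K) := rfl
    rw [this, Real.volume_preimage_mul_left two_ne_zero, measure_preimage_add_right, ← mul_assoc,
      ← ENNReal.ofReal_ofNat, ← ENNReal.ofReal_mul (by norm_num)]
    norm_num
  have e2 : volume L = 2 * volume ((fun y : ℝ => 2 * y + (-a)) ⁻¹' L) := by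
    have : (fun y : ℝ => 2 * y + (-a)) ⁻¹' L = (fun y : ℝ => 2 * y) ⁻¹' ((fun y => y + (-a)) ⁻¹' L) := rfl
    rw [this, Real.volume_preimage_mul_left two_ne_zero, measure_preimage_add_right, ← mul_assoc,
      ← ENNReal.ofReal_ofNat, ← ENNReal.ofReal_mul (by norm_num)]
    norm_num
  rw [e1, e2, ← mul_add]
  gcongr
  have hd : AEDisjoint volume ((fun y : ℝ => 2 * y + (-b)) ⁻¹' K) ((fun y : ℝ => 2 * y + (-a)) ⁻¹' L) := by
    refine measure_mono_null (t := {(a+b)/2}) ?_ (by simp)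
    rintro y ⟨h1, h2⟩
    have := ha (Set.mem_insert_of_mem _ h1)
    have := hb (Set.mem_insert_of_mem _ h2)
    simp only [Set.mem_singleton_iff]
    linarith
  rw [← measure_union₀ (((by fun_prop : Measurable fun y : ℝ => 2 * y + (-a)) hL.measurableSet).nullMeasurableSet) hd]
  apply measure_mono
  rintro y (hy | hy)
  · have := h _ (hKA hy) _ (hLB' hbL)
    convert this using 1
    simp
  · have := h _ (hKA' haK) _ (hLB hy)
    convert this using 1
    simp

lemma layer (f : ℝ → ℝ≥0∞) (hf : Measurable f) (h1 : ∀ x, f x ≤ 1) :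
    ∫⁻ x, f x = ∫⁻ t in Set.Ioi (0:ℝ), volume {x | t < (f x).toReal} := by
  rw [← lintegral_eq_lintegral_meas_lt volume (by filter_upwards with x; simp) (by fun_prop)]
  refine lintegral_congr fun x => ?_
  rw [ENNReal.ofReal_toReal]
  exact ((h1 x).trans_lt ENNReal.one_lt_top).ne

lemma pl_norm (f g h : ℝ → ℝ≥0∞) (hf : Measurable f) (hg : Measurable g) (hh : Measurable h)
    (hf1 : ⨆ x, f x = 1) (hg1 : ⨆ x, g x = 1)
    (H : ∀ a b, f a * g b ≤ h ((1/2:ℝ) • (a + b)) ^ 2) :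
    (∫⁻ x, f x) + (∫⁻ x, g x) ≤ 2 * ∫⁻ x, h x := by
  have f1 : ∀ x, f x ≤ 1 := fun x => hf1 ▸ le_iSup f x
  have g1 : ∀ x, g x ≤ 1 := fun x => hg1 ▸ le_iSup g x
  have hT : ∀ (k : ℝ → ℝ≥0∞), (∀ x, k x ≤ 1) → ∀ x (t : ℝ), 0 < t →
      (t < (k x).toReal ↔ ENNReal.ofReal t < k x) := by
    intro k hk x t ht
    rw [ENNReal.ofReal_lt_iff_lt_toReal ht.le ((hk x).trans_lt ENNReal.one_lt_top).ne]
  have hm : ∫⁻ x, min (h x) 1 ≤ ∫⁻ x, h x := lintegral_mono fun x => min_le_left _ _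
  refine le_trans ?_ (mul_le_mul_right hm 2)
  have m1 : ∀ x, min (h x) 1 ≤ 1 := fun x => min_le_right _ _
  rw [layer f hf f1, layer g hg g1, layer _ (hh.min measurable_const) m1]
  rw [← lintegral_const_mul' _ _ (by simp)]
  refine (le_lintegral_add _ _).trans ?_
  refine setLIntegral_mono' measurableSet_Ioi fun t ht => ?_
  have ht : 0 < t := ht
  simp only [hT f f1 _ t ht, hT g g1 _ t ht, hT (fun x => min (h x) 1) m1 _ t ht]
  by_cases h1 : ENNReal.ofReal t < 1
  · apply bm_one
    · exact hf measurableSet_Ioi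
    · exact hg measurableSet_Ioi
    · rw [← hf1] at h1; exact lt_iSup_iff.1 h1
    · rw [← hg1] at h1; exact lt_iSup_iff.1 h1
    · intro a ha b hb
      refine lt_min ?_ h1
      have := (ENNReal.mul_lt_mul ha hb).trans_le (H a b)
      rw [← sq] at this
      by_contra hcon
      exact absurd this (not_lt.2 (pow_le_pow_left' (not_lt.1 hcon) 2))
  · have e1 : {x | ENNReal.ofReal t < f x} = ∅ := by
      ext x; simpa using (f1 x).trans (not_lt.1 h1)
    have e2 : {x | ENNReal.ofReal t < g x} = ∅ := by
      ext x; simpa using (g1 x).trans (not_lt.1 h1)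
    simp [e1, e2]

lemma amgm (u v w : ℝ≥0∞) (h : u + v ≤ 2 * w) : u * v ≤ w ^ 2 := by
  by_cases hw : w = ⊤
  · simp [hw]
  have hu : u ≠ ⊤ := ne_top_of_le_ne_top (ENNReal.mul_ne_top (by simp) hw) (le_self_add.trans h)
  have hv : v ≠ ⊤ := ne_top_of_le_ne_top (ENNReal.mul_ne_top (by simp) hw) (le_add_self.trans h)
  lift u to ℝ≥0 using hu
  lift v to ℝ≥0 using hv
  lift w to ℝ≥0 using hw
  norm_cast at *
  have h' : (u:ℝ) + v ≤ 2 * w := by exact_mod_cast h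
  have : (u:ℝ) * v ≤ w^2 := by nlinarith [sq_nonneg ((u:ℝ) - v), u.2, v.2, w.2, mul_self_le_mul_self (add_nonneg u.2 v.2) h']
  exact_mod_cast this

def PL {E : Type*} [AddCommGroup E] [Module ℝ E] [MeasurableSpace E] (μ : Measure E) : Prop :=
  ∀ f g h : E → ℝ≥0∞, Measurable f → Measurable g → Measurable h →
    (∀ a b, f a * g b ≤ h ((1/2:ℝ) • (a + b)) ^ 2) →
    (∫⁻ x, f x ∂μ) * (∫⁻ x, g x ∂μ) ≤ (∫⁻ x, h x ∂μ) ^ 2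

lemma pl_bdd (f g h : ℝ → ℝ≥0∞) (hf : Measurable f) (hg : Measurable g) (hh : Measurable h)
    (N M : ℕ) (hfN : ∀ x, f x ≤ N) (hgM : ∀ x, g x ≤ M)
    (H : ∀ a b, f a * g b ≤ h ((1/2:ℝ) • (a + b)) ^ 2) :
    (∫⁻ x, f x) * ∫⁻ x, g x ≤ (∫⁻ x, h x) ^ 2 := by
  set A := ⨆ x, f x with hA
  set B := ⨆ x, g x with hB
  by_cases A0 : A = 0
  · have : ∀ x, f x = 0 := by simpa [hA] using A0
    simp [this]
  by_cases B0 : B = 0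
  · have : ∀ x, g x = 0 := by simpa [hB] using B0
    simp [this]
  have At : A ≠ ⊤ := ne_top_of_le_ne_top (by simp) (iSup_le hfN)
  have Bt : B ≠ ⊤ := ne_top_of_le_ne_top (by simp) (iSup_le hgM)
  obtain ⟨c, hc⟩ : ∃ c : ℝ≥0∞, c ^ 2 = A * B := by
    refine ⟨(A * B) ^ (1/2:ℝ), ?_⟩
    rw [← ENNReal.rpow_natCast, ← ENNReal.rpow_mul]; norm_num
  have ABt : A * B ≠ ⊤ := ENNReal.mul_ne_top At Bt
  have AB0 : A * B ≠ 0 := mul_ne_zero A0 B0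
  have key := pl_norm (fun x => A⁻¹ * f x) (fun x => B⁻¹ * g x) (fun x => c⁻¹ * h x)
    (by fun_prop) (by fun_prop) (by fun_prop)
    (by rw [← ENNReal.mul_iSup, ← hA, ENNReal.inv_mul_cancel A0 At])
    (by rw [← ENNReal.mul_iSup, ← hB, ENNReal.inv_mul_cancel B0 Bt])
    (by
      intro a b
      rw [mul_pow, ← ENNReal.inv_pow, hc, ENNReal.mul_inv (.inl A0) (.inl At)]
      calc _ = A⁻¹ * B⁻¹ * (f a * g b) := by ring
        _ ≤ _ := by gcongr; exact H a b)
  replace key := amgm _ _ _ key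
  rw [lintegral_const_mul _ hf, lintegral_const_mul _ hg, lintegral_const_mul _ hh,
    mul_pow, ← ENNReal.inv_pow, hc] at key
  have k2 := mul_le_mul_right key (A * B)
  rw [← mul_assoc (A * B) (A * B)⁻¹, ENNReal.mul_inv_cancel AB0 ABt, one_mul] at k2
  refine le_trans (le_of_eq ?_) k2
  calc _ = (A * A⁻¹) * (B * B⁻¹) * ((∫⁻ x, f x) * ∫⁻ x, g x) := by
        rw [ENNReal.mul_inv_cancel A0 At, ENNReal.mul_inv_cancel B0 Bt]; simp
    _ = _ := by ring

lemma iSup_trunc (f : ℝ → ℝ≥0∞) (hf : Measurable f) :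
    ∫⁻ x, f x = ⨆ n : ℕ, ∫⁻ x, min (f x) n := by
  rw [← lintegral_iSup (fun n => by fun_prop)]
  · refine lintegral_congr fun x => ?_
    rw [← inf_iSup_eq, ENNReal.iSup_natCast]; simp
  · intro n m hnm x
    exact min_le_min_left _ (by exact_mod_cast hnm)

lemma PL_volume : PL (volume : Measure ℝ) := by
  intro f g h hf hg hh H
  rw [iSup_trunc f hf, iSup_trunc g hg, ENNReal.iSup_mul]
  refine iSup_le fun n => ?_
  rw [ENNReal.mul_iSup]
  refine iSup_le fun m => ?_
  refine pl_bdd _ _ h (by fun_prop) (by fun_prop) hh n m (fun x => min_le_right _ _)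
    (fun x => min_le_right _ _) fun a b => le_trans ?_ (H a b)
  exact mul_le_mul' (min_le_left _ _) (min_le_left _ _)

lemma PL_gaussianReal : PL (gaussianReal 0 1) := by
  intro f g h hf hg hh H
  have hm := measurable_gaussianPDF 0 1
  rw [gaussianReal_of_var_ne_zero _ one_ne_zero,
    lintegral_withDensity_eq_lintegral_mul _ hm hf, lintegral_withDensity_eq_lintegral_mul _ hm hg,
    lintegral_withDensity_eq_lintegral_mul _ hm hh]
  refine PL_volume _ _ _ (hm.mul hf) (hm.mul hg) (hm.mul hh) fun a b => ?_
  simp only [Pi.mul_apply]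
  have : gaussianPDF 0 1 a * gaussianPDF 0 1 b ≤ gaussianPDF 0 1 ((1/2:ℝ) • (a + b)) ^ 2 := by
    unfold gaussianPDF
    rw [← ENNReal.ofReal_mul (gaussianPDFReal_nonneg _ _ _), ← ENNReal.ofReal_pow (gaussianPDFReal_nonneg _ _ _)]
    apply ENNReal.ofReal_le_ofReal
    unfold gaussianPDFReal
    rw [mul_pow, mul_mul_mul_comm, ← sq, ← Real.exp_add, ← Real.exp_nat_mul]
    gcongr
    simp
    nlinarith [sq_nonneg (a - b)]
  calc _ = (gaussianPDF 0 1 a * gaussianPDF 0 1 b) * (f a * g b) := by ring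
    _ ≤ _ := mul_le_mul' this (H a b)
    _ = _ := by ring

lemma PL.prod {E F : Type*} [AddCommGroup E] [Module ℝ E] [MeasurableSpace E]
    [AddCommGroup F] [Module ℝ F] [MeasurableSpace F] {μ : Measure E} {ν : Measure F}
    [SFinite μ] [SFinite ν] (hμ : PL μ) (hν : PL ν) : PL (μ.prod ν) := by
  intro f g h hf hg hh H
  rw [lintegral_prod _ hf.aemeasurable, lintegral_prod _ hg.aemeasurable,
    lintegral_prod _ hh.aemeasurable]
  refine hμ _ _ _ hf.lintegral_prod_right' hg.lintegral_prod_right' hh.lintegral_prod_right' ?_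
  intro a b
  refine hν _ _ _ (by fun_prop) (by fun_prop) (by fun_prop) fun c d => ?_
  simpa using H (a, c) (b, d)

lemma PL.map {E F : Type*} [AddCommGroup E] [Module ℝ E] [MeasurableSpace E]
    [AddCommGroup F] [Module ℝ F] [MeasurableSpace F] {μ : Measure E} (hμ : PL μ)
    (φ : E → F) (hφ : Measurable φ)
    (hm : ∀ a b, φ ((1/2:ℝ) • (a + b)) = (1/2:ℝ) • (φ a + φ b)) : PL (μ.map φ) := by
  intro f g h hf hg hh H
  rw [lintegral_map hf hφ, lintegral_map hg hφ, lintegral_map hh hφ]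
  refine hμ _ _ _ (hf.comp hφ) (hg.comp hφ) (hh.comp hφ) fun a b => ?_
  simp only [hm]
  exact H (φ a) (φ b)

lemma PL_pi (n : ℕ) : PL (Measure.pi (fun _ : Fin n => gaussianReal 0 1)) := by
  induction n with
  | zero =>
    intro f g h hf hg hh H
    rw [Measure.pi_of_empty (fun _ : Fin 0 => gaussianReal 0 1) 0, lintegral_dirac' _ hf,
      lintegral_dirac' _ hg, lintegral_dirac' _ hh]
    simpa using H 0 0
  | succ n ih =>
    have := (measurePreserving_piFinSuccAbove (fun _ : Fin (n+1) => gaussianReal 0 1) 0).symm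
    rw [← this.map_eq]
    refine (PL_gaussianReal.prod ih).map _ this.measurable fun a b => ?_
    ext i
    refine Fin.cases ?_ (fun j => ?_) i <;> simp [MeasurableEquiv.piFinSuccAbove] <;> ring

lemma PL_gaussian {d : ℕ} (μ : Measure (EuclideanSpace ℝ (Fin d))) [IsGaussian μ] : PL μ := by
  let S : Matrix (Fin d) (Fin d) ℝ := fun i j =>
    covarianceBilin μ (EuclideanSpace.basisFun _ ℝ i) (EuclideanSpace.basisFun _ ℝ j)
  have hSxy : ∀ x y : EuclideanSpace ℝ (Fin d), covarianceBilin μ x y = x ⬝ᵥ S.mulVec y := by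
    intro x y
    conv_lhs => rw [← (EuclideanSpace.basisFun _ ℝ).sum_repr x, ← (EuclideanSpace.basisFun _ ℝ).sum_repr y]
    simp only [map_sum, map_smul, FunLike.coe_sum, Finset.sum_apply, FunLike.coe_smul,
      Pi.smul_apply, smul_eq_mul, EuclideanSpace.basisFun_repr, S, dotProduct, Matrix.mulVec,
      Finset.mul_sum]
    rw [Finset.sum_comm]
    refine Finset.sum_congr rfl fun i _ => Finset.sum_congr rfl fun j _ => ?_
    ring
  have hS : S.PosSemidef := by
    refine Matrix.PosSemidef.of_dotProduct_mulVec_nonneg ?_ fun x => ?_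
    · ext i j
      exact isPosSemidef_covarianceBilin.isSymm.eq (EuclideanSpace.basisFun _ ℝ j) _
    · have := hSxy (WithLp.toLp 2 x) (WithLp.toLp 2 x)
      rw [star_trivial]
      refine le_of_le_of_eq ?_ this
      exact isPosSemidef_covarianceBilin.nonneg _
  have : μ = multivariateGaussian μ[id] S := by
    apply IsGaussian.ext
    · simp
    · ext x y
      rw [covarianceBilin_multivariateGaussian hS, hSxy]
  rw [this, multivariateGaussian, ← map_pi_eq_stdGaussian]
  refine ((PL_pi d).map _ (by fun_prop) ?_).map _ (by fun_prop) ?_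
  · intro a b; rfl
  · intro a b
    simp only [map_smul, map_add]
    module

/-- Anderson's inequality: if `X` is a centered Gaussian random vector in `ℝᵈ`
and `C` is a symmetric convex Borel set, then `P{X + x ∈ C} ≤ P{X ∈ C}`. -/
theorem stmt11 {Ω : Type*} [MeasureSpace Ω] [IsProbabilityMeasure (ℙ : Measure Ω)]
    {d : ℕ} (X : Ω → (Fin d → ℝ)) (hXmeas : Measurable X)
    (hXgauss : ∀ l : (Fin d → ℝ) →L[ℝ] ℝ, ∃ v : ℝ≥0,
      Measure.map (fun ω => l (X ω)) ℙ = gaussianReal 0 v)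
    (C : Set (Fin d → ℝ)) (hCconv : Convex ℝ C) (hCsym : C = -C)
    (hCmeas : MeasurableSet C) (x : Fin d → ℝ) :
    ℙ {ω | X ω + x ∈ C} ≤ ℙ {ω | X ω ∈ C} := by
  set μ := Measure.map X ℙ with hμ
  have : IsProbabilityMeasure μ := Measure.isProbabilityMeasure_map hXmeas.aemeasurable
  have hmap : ∀ l : (Fin d → ℝ) →L[ℝ] ℝ, ∃ v : ℝ≥0, μ.map l = gaussianReal 0 v := by
    intro l
    obtain ⟨v, hv⟩ := hXgauss l
    exact ⟨v, by rw [hμ, Measure.map_map (by fun_prop) hXmeas]; exact hv⟩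
  have hG : IsGaussian μ := isGaussian_of_map_eq_gaussianReal fun l => ⟨0, hmap l⟩
  have hPL : PL μ := by
    let e := (EuclideanSpace.equiv (Fin d) ℝ)
    have e1 : μ = (μ.map e.symm).map e := by
      rw [Measure.map_map (by fun_prop) (by fun_prop)]; simp
    rw [e1]
    exact (PL_gaussian (μ.map e.symm)).map _ (by fun_prop) (by simp)
  have hneg : μ.map (fun y => -y) = μ := by
    have : IsProbabilityMeasure (μ.map (fun y => -y)) :=
      Measure.isProbabilityMeasure_map (by fun_prop)
    apply Measure.ext_of_charFunDual
    ext l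
    rw [charFunDual_eq_charFun_map_one, charFunDual_eq_charFun_map_one,
      Measure.map_map (by fun_prop) (by fun_prop)]
    obtain ⟨v, hv⟩ := hmap l
    obtain ⟨w, hw⟩ := hmap l
    have : (l ∘ fun y => -y) = (fun z : ℝ => -z) ∘ l := by ext y; simp
    rw [this, ← Measure.map_map (by fun_prop) (by fun_prop), hv, gaussianReal_map_neg]
    simp
  have m1 : MeasurableSet {y | y + x ∈ C} := (by fun_prop : Measurable fun y : Fin d → ℝ => y + x) hCmeas
  have m2 : MeasurableSet {y | y - x ∈ C} := (by fun_prop : Measurable fun y : Fin d → ℝ => y - x) hCmeas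
  have key := hPL ({y | y + x ∈ C}.indicator 1) ({y | y - x ∈ C}.indicator 1) (C.indicator 1)
    (measurable_one.indicator m1) (measurable_one.indicator m2) (measurable_one.indicator hCmeas) (by
      intro a b
      by_cases ha : a + x ∈ C
      · by_cases hb : b - x ∈ C
        · have : (1/2:ℝ) • (a + b) ∈ C := by
            have := hCconv ha hb (a := 1/2) (b := 1/2) (by norm_num) (by norm_num) (by norm_num)
            convert this using 1
            module
          rw [Set.indicator_of_mem this]
          simp [Set.indicator, ha, hb]
        · simp [hb]
      · simp [ha])
  rw [lintegral_indicator_one m1, lintegral_indicator_one m2, lintegral_indicator_one hCmeas] at key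
  have hs : μ {y | y - x ∈ C} = μ {y | y + x ∈ C} := by
    conv_lhs => rw [← hneg, Measure.map_apply (by fun_prop) m2]
    congr 1
    ext y
    simp only [Set.mem_preimage, Set.mem_ofPred_eq]
    conv_lhs => rw [hCsym, Set.mem_neg]
    simp [add_comm]
  rw [hs, ← sq] at key
  have : μ {y | y + x ∈ C} ≤ μ C := by
    by_contra hcon
    have hlt := ENNReal.mul_lt_mul (not_le.1 hcon) (not_le.1 hcon)
    rw [← sq, ← sq] at hlt
    exact absurd key (not_le.2 hlt)
  rw [hμ, Measure.map_apply hXmeas m1, Measure.map_apply hXmeas hCmeas] at this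
  exact this
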